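/- There exist constants C > 0 and λ₀ > 0, depending only on α and β, such that for every real Dirichlet quasimode datum (u, λ, f) on the stadium S with λ ≥ λ₀, one has ∫_{∂S} |∂_N u|² dl ≤ C ( λ² ‖u‖²_{L²(S)} + ‖f‖²_{L²(S)} ). -/

import Mathlib

open MeasureTheory Real Set Filter

noncomputable section

/-- Partial derivative in the first (x) variable. -/
def pdx (u : ℝ × ℝ → ℝ) (p : ℝ × ℝ) : ℝ := deriv (fun t => u (t, p.2)) p.1

/-- Partial derivative in the second (y) variable. -/
def pdy (u : ℝ × ℝ → ℝ) (p : ℝ × ℝ) : ℝ := deriv (fun t => u (p.1, t)) p.2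

/-- The positive Laplacian `Δu = -u_xx - u_yy`. -/
def lap (u : ℝ × ℝ → ℝ) (p : ℝ × ℝ) : ℝ := -(pdx (pdx u) p) - (pdy (pdy u) p)

/-- The central rectangle `R = [-α,α] × [-β,β]`. -/
def Rect (α β : ℝ) : Set (ℝ × ℝ) := Icc (-α) α ×ˢ Icc (-β) β

/-- The wings `W = W₊ ∪ W₋`, two half-discs of radius β centered at `(±α, 0)`. -/
def Wings (α β : ℝ) : Set (ℝ × ℝ) :=
  {p | (p.1 - α) ^ 2 + p.2 ^ 2 ≤ β ^ 2 ∧ α ≤ p.1} ∪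
  {p | (p.1 + α) ^ 2 + p.2 ^ 2 ≤ β ^ 2 ∧ p.1 ≤ -α}

/-- The Bunimovich stadium `S = R ∪ W`. -/
def Stadium (α β : ℝ) : Set (ℝ × ℝ) := Rect α β ∪ Wings α β

/-- The boundary `∂S`: two horizontal segments and two semicircles. -/
def StadiumBoundary (α β : ℝ) : Set (ℝ × ℝ) :=
  {p | |p.1| ≤ α ∧ (p.2 = β ∨ p.2 = -β)} ∪
  {p | (|p.1| - α) ^ 2 + p.2 ^ 2 = β ^ 2 ∧ α ≤ |p.1|}

/-- Boundary integral `∫_{∂S} g dl` of an integrand `g` depending on the boundary point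
and the outward unit normal at that point. -/
def bdryInt (α β : ℝ) (g : ℝ × ℝ → ℝ × ℝ → ℝ) : ℝ :=
  (∫ x in (-α)..α, (g (x, β) (0, 1) + g (x, -β) (0, -1))) +
  β * ∫ θ in (-(π / 2))..(π / 2),
    (g (α + β * cos θ, β * sin θ) (cos θ, sin θ) +
     g (-(α + β * cos θ), β * sin θ) (-cos θ, sin θ))

/-- Boundary integral `∫_{∂S ∩ W} g dl` over the two semicircles only. -/
def bdryIntW (α β : ℝ) (g : ℝ × ℝ → ℝ × ℝ → ℝ) : ℝ :=
  β * ∫ θ in (-(π / 2))..(π / 2),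
    (g (α + β * cos θ, β * sin θ) (cos θ, sin θ) +
     g (-(α + β * cos θ), β * sin θ) (-cos θ, sin θ))

/-- The normal derivative `∂_N u = n₁ ∂_x u + n₂ ∂_y u` at a boundary point `p`
with outward unit normal `n`. -/
def nderiv (u : ℝ × ℝ → ℝ) (p n : ℝ × ℝ) : ℝ := n.1 * pdx u p + n.2 * pdy u p

/-- A real Dirichlet quasimode datum `(u, λ, f)` on the stadium: `λ > 0`, `u` smooth on a
neighborhood of `S`, `u = 0` on `∂S`, and `(Δ - λ²) u = f` on `S`. -/
structure QMDatum (α β : ℝ) where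
  u : ℝ × ℝ → ℝ
  lam : ℝ
  f : ℝ × ℝ → ℝ
  lam_pos : 0 < lam
  smooth : ∃ V : Set (ℝ × ℝ), IsOpen V ∧ Stadium α β ⊆ V ∧ ContDiffOn ℝ (⊤ : ℕ∞) u V
  dirichlet : ∀ p ∈ StadiumBoundary α β, u p = 0
  eqn : ∀ p ∈ Stadium α β, lap u p - lam ^ 2 * u p = f p


lemma fubini_y (a b : ℝ) (hab : a ≤ b) (l : ℝ → ℝ) (hl : ∀ x, 0 ≤ l x) (S : Set (ℝ × ℝ))
    (hS : IsCompact S) (hSl : ∀ p, p ∈ S ↔ p.1 ∈ Icc a b ∧ p.2 ∈ Icc (-l p.1) (l p.1))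
    (Q Qy : ℝ × ℝ → ℝ) (hQy : Continuous Qy)
    (hd : ∀ x y, HasDerivAt (fun t => Q (x, t)) (Qy (x, y)) y) :
    ∫ p in S, Qy p = ∫ x in a..b, (Q (x, l x) - Q (x, -l x)) := by
  have hm : MeasurableSet S := hS.isClosed.measurableSet
  have hi : IntegrableOn Qy S := hQy.continuousOn.integrableOn_compact hS
  rw [← integral_indicator hm, Measure.volume_eq_prod, integral_prod]
  · rw [intervalIntegral.integral_of_le hab, ← integral_Icc_eq_integral_Ioc,
      ← integral_indicator measurableSet_Icc]
    congr 1
    ext x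
    by_cases hx : x ∈ Icc a b
    · rw [indicator_of_mem hx]
      have h1 : (fun y => S.indicator Qy (x, y)) =
          (Icc (-l x) (l x)).indicator (fun y => Qy (x, y)) := by
        ext y
        by_cases hy : y ∈ Icc (-l x) (l x)
        · rw [indicator_of_mem hy, indicator_of_mem ((hSl _).2 ⟨hx, hy⟩)]
        · rw [indicator_of_notMem hy, indicator_of_notMem]
          exact fun h => hy ((hSl _).1 h).2
      rw [h1, integral_indicator measurableSet_Icc, integral_Icc_eq_integral_Ioc,
        ← intervalIntegral.integral_of_le (by linarith [hl x])]
      refine intervalIntegral.integral_eq_sub_of_hasDerivAt (f := fun t => Q (x, t))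
        (fun y _ => hd x y) ?_
      exact (hQy.comp (by fun_prop : Continuous fun y : ℝ => (x, y))).intervalIntegrable _ _
    · rw [indicator_of_notMem hx]
      have h1 : (fun y => S.indicator Qy (x, y)) = fun _ => 0 := by
        ext y
        rw [indicator_of_notMem]
        exact fun h => hx ((hSl _).1 h).1
      rw [h1]; simp
  · rw [← Measure.volume_eq_prod]
    exact hi.integrable_indicator hm

lemma fubini_x (a b : ℝ) (hab : a ≤ b) (l : ℝ → ℝ) (hl : ∀ x, 0 ≤ l x) (S : Set (ℝ × ℝ))
    (hS : IsCompact S) (hSl : ∀ p, p ∈ S ↔ p.2 ∈ Icc a b ∧ p.1 ∈ Icc (-l p.2) (l p.2))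
    (P Px : ℝ × ℝ → ℝ) (hPx : Continuous Px)
    (hd : ∀ x y, HasDerivAt (fun t => P (t, y)) (Px (x, y)) x) :
    ∫ p in S, Px p = ∫ y in a..b, (P (l y, y) - P (-l y, y)) := by
  have h := fubini_y a b hab l hl (Prod.swap '' S) (hS.image continuous_swap)
    (by
      rintro ⟨x, y⟩
      rw [image_swap_eq_preimage_swap]
      simpa using hSl (y, x))
    (P ∘ Prod.swap) (Px ∘ Prod.swap) (hPx.comp continuous_swap) (fun x y => hd y x)
  simp only [Function.comp, Prod.swap_prod_mk] at h
  rw [← h]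
  have hmp : MeasurePreserving (Prod.swap : ℝ × ℝ → ℝ × ℝ) volume volume :=
    Measure.measurePreserving_swap
  have := hmp.setIntegral_preimage_emb (MeasurableEquiv.prodComm.measurableEmbedding :
    MeasurableEmbedding (Prod.swap : ℝ × ℝ → ℝ × ℝ)) Px S
  rw [image_swap_eq_preimage_swap, ← this]

/-- right arc -/
lemma arc_Q (α β : ℝ) (hβ : 0 < β) (Q : ℝ × ℝ → ℝ) (hQ : Continuous Q) :
    ∫ x in α..(α + β), (Q (x, √(β ^ 2 - (x - α) ^ 2)) - Q (x, -√(β ^ 2 - (x - α) ^ 2))) =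
      β * ∫ θ in (-(π / 2))..(π / 2), Q (α + β * cos θ, β * sin θ) * sin θ := by
  have hc1 : Continuous fun x => Q (x, √(β ^ 2 - (x - α) ^ 2)) := hQ.comp (by fun_prop)
  have hc2 : Continuous fun x => Q (x, -√(β ^ 2 - (x - α) ^ 2)) := hQ.comp (by fun_prop)
  have hc3 : Continuous fun θ => Q (α + β * cos θ, β * sin θ) * sin θ :=
    (hQ.comp (by fun_prop)).mul continuous_sin
  have hder : ∀ θ : ℝ, HasDerivAt (fun θ => α + β * cos θ) (β * (-sin θ)) θ := fun θ =>
    ((hasDerivAt_cos θ).const_mul β).const_add α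
  have hs : ∀ θ, β ^ 2 - (α + β * cos θ - α) ^ 2 = (β * sin θ) ^ 2 := by
    intro θ
    have := sin_sq_add_cos_sq θ
    linear_combination (-β^2) * this
  have e1 := intervalIntegral.integral_comp_mul_deriv (a := 0) (b := π / 2)
    (f := fun θ => α + β * cos θ) (f' := fun θ => β * (-sin θ))
    (g := fun x => Q (x, √(β ^ 2 - (x - α) ^ 2)))
    (fun θ _ => hder θ) (by fun_prop) hc1
  have e2 := intervalIntegral.integral_comp_mul_deriv (a := -(π / 2)) (b := 0)
    (f := fun θ => α + β * cos θ) (f' := fun θ => β * (-sin θ))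
    (g := fun x => Q (x, -√(β ^ 2 - (x - α) ^ 2)))
    (fun θ _ => hder θ) (by fun_prop) hc2
  simp only [Function.comp, hs, cos_zero, cos_neg, cos_pi_div_two, mul_one, mul_zero,
    add_zero] at e1 e2
  have f1 : ∫ θ in (0:ℝ)..(π / 2), Q (α + β * cos θ, √((β * sin θ) ^ 2)) * (β * -sin θ) =
      -β * ∫ θ in (0:ℝ)..(π / 2), Q (α + β * cos θ, β * sin θ) * sin θ := by
    rw [← intervalIntegral.integral_const_mul]
    refine intervalIntegral.integral_congr fun θ hθ => ?_
    rw [uIcc_of_le (by positivity)] at hθ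
    have : 0 ≤ sin θ := sin_nonneg_of_nonneg_of_le_pi hθ.1 (by linarith [hθ.2, pi_pos])
    simp only [sqrt_sq (mul_nonneg hβ.le this)]
    ring
  have f2 : ∫ θ in (-(π / 2))..0, Q (α + β * cos θ, -√((β * sin θ) ^ 2)) * (β * -sin θ) =
      -β * ∫ θ in (-(π / 2))..0, Q (α + β * cos θ, β * sin θ) * sin θ := by
    rw [← intervalIntegral.integral_const_mul]
    refine intervalIntegral.integral_congr fun θ hθ => ?_
    rw [uIcc_of_le (by linarith [pi_pos])] at hθ
    have : sin θ ≤ 0 := sin_nonpos_of_nonpos_of_neg_pi_le hθ.2 (by linarith [hθ.1, pi_pos])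
    have h3 : √((β * sin θ) ^ 2) = -(β * sin θ) := by
      rw [sqrt_sq_eq_abs, abs_of_nonpos (mul_nonpos_of_nonneg_of_nonpos hβ.le this)]
    simp only [h3, neg_neg]
    ring
  rw [f1, intervalIntegral.integral_symm α (α + β)] at e1
  rw [f2] at e2
  rw [intervalIntegral.integral_sub (hc1.intervalIntegrable _ _) (hc2.intervalIntegrable _ _),
    ← intervalIntegral.integral_add_adjacent_intervals (hc3.intervalIntegrable (-(π / 2)) 0)
      (hc3.intervalIntegrable 0 (π / 2))]
  linarith

lemma arc_P (β : ℝ) (hβ : 0 < β) (G : ℝ → ℝ → ℝ) (hG : Continuous fun p : ℝ × ℝ => G p.1 p.2) :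
    ∫ y in (-β)..β, G (√(β ^ 2 - y ^ 2)) y =
      β * ∫ θ in (-(π / 2))..(π / 2), G (β * cos θ) (β * sin θ) * cos θ := by
  have hc1 : Continuous fun y => G (√(β ^ 2 - y ^ 2)) y :=
    hG.comp (by fun_prop : Continuous fun y : ℝ => (√(β ^ 2 - y ^ 2), y))
  have e1 := intervalIntegral.integral_comp_mul_deriv (a := -(π / 2)) (b := π / 2)
    (f := fun θ => β * sin θ) (f' := fun θ => β * cos θ)
    (g := fun y => G (√(β ^ 2 - y ^ 2)) y)
    (fun θ _ => (hasDerivAt_sin θ).const_mul β) (by fun_prop) hc1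
  simp only [Function.comp, sin_neg, sin_pi_div_two, mul_one, mul_neg] at e1
  rw [← e1, ← intervalIntegral.integral_const_mul]
  refine intervalIntegral.integral_congr fun θ hθ => ?_
  rw [uIcc_of_le (by linarith [pi_pos])] at hθ
  have : 0 ≤ cos θ := cos_nonneg_of_mem_Icc hθ
  have h3 : √(β ^ 2 - (β * sin θ) ^ 2) = β * cos θ := by
    rw [← sqrt_sq (mul_nonneg hβ.le this)]
    congr 1
    have := sin_sq_add_cos_sq θ
    linear_combination (-β^2) * this
  simp only [h3]
  ring

lemma stadium_x (α β : ℝ) (hα : 0 < α) (hβ : 0 < β) (p : ℝ × ℝ) :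
    p ∈ Stadium α β ↔ p.2 ∈ Icc (-β) β ∧
      p.1 ∈ Icc (-(α + √(β ^ 2 - p.2 ^ 2))) (α + √(β ^ 2 - p.2 ^ 2)) := by
  obtain ⟨x, y⟩ := p
  simp only [Stadium, Rect, Wings, mem_union, mem_prod, mem_Icc, mem_ofPred_eq]
  have hs := sqrt_nonneg (β ^ 2 - y ^ 2)
  constructor
  · rintro (⟨⟨h1, h2⟩, h3⟩ | ⟨h1, h2⟩ | ⟨h1, h2⟩)
    · exact ⟨h3, by linarith, by linarith⟩
    · have h4 : |x - α| ≤ √(β ^ 2 - y ^ 2) := abs_le_sqrt (by linarith)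
      have h5 := abs_le.1 h4
      exact ⟨abs_le.1 (abs_le_of_sq_le_sq (by nlinarith) hβ.le), by linarith, by linarith⟩
    · have h4 : |x + α| ≤ √(β ^ 2 - y ^ 2) := abs_le_sqrt (by linarith)
      have h5 := abs_le.1 h4
      exact ⟨abs_le.1 (abs_le_of_sq_le_sq (by nlinarith) hβ.le), by linarith, by linarith⟩
  · rintro ⟨h3, h1, h2⟩
    have hq := sq_sqrt (show 0 ≤ β ^ 2 - y ^ 2 by nlinarith)
    by_cases hx : x ≤ α
    · by_cases hx' : -α ≤ x
      · exact Or.inl ⟨⟨hx', hx⟩, h3⟩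
      · exact Or.inr (Or.inr ⟨by nlinarith, by linarith⟩)
    · exact Or.inr (Or.inl ⟨by nlinarith, by linarith⟩)

lemma stadium_y (α β : ℝ) (hα : 0 < α) (hβ : 0 < β) (p : ℝ × ℝ) :
    p ∈ Stadium α β ↔ p.1 ∈ Icc (-(α + β)) (α + β) ∧
      p.2 ∈ Icc (-√(β ^ 2 - (max (|p.1| - α) 0) ^ 2)) (√(β ^ 2 - (max (|p.1| - α) 0) ^ 2)) := by
  obtain ⟨x, y⟩ := p
  simp only [Stadium, Rect, Wings, mem_union, mem_prod, mem_Icc, mem_ofPred_eq]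
  have hs := sqrt_nonneg (β ^ 2 - (max (|x| - α) 0) ^ 2)
  rcases le_total (|x|) α with hx | hx
  · rw [max_eq_right (by linarith)]
    have hx2 := abs_le.1 hx
    rw [show β ^ 2 - 0 ^ 2 = β ^ 2 by ring, sqrt_sq hβ.le]
    constructor
    · rintro (⟨⟨h1, h2⟩, h3⟩ | ⟨h1, h2⟩ | ⟨h1, h2⟩)
      · exact ⟨⟨by linarith, by linarith⟩, h3⟩
      · exact ⟨⟨by linarith, by linarith⟩,
          abs_le.1 (abs_le_of_sq_le_sq (by nlinarith) hβ.le)⟩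
      · exact ⟨⟨by linarith, by linarith⟩,
          abs_le.1 (abs_le_of_sq_le_sq (by nlinarith) hβ.le)⟩
    · rintro ⟨h1, h2⟩
      exact Or.inl ⟨hx2, h2⟩
  · rw [max_eq_left (by linarith)] at hs ⊢
    constructor
    · intro h
      have key : (|x| - α) ^ 2 + y ^ 2 ≤ β ^ 2 := by
        rcases h with ⟨⟨h1, h2⟩, h3⟩ | ⟨h1, h2⟩ | ⟨h1, h2⟩
        · have : |x| = α := le_antisymm (abs_le.2 ⟨h1, h2⟩) hx
          rw [this]; nlinarith
        · rwa [abs_of_nonneg (by linarith)]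
        · rw [abs_of_nonpos (by linarith)]; nlinarith
      have h4 : |(|x| - α)| ≤ β := abs_le_of_sq_le_sq (by nlinarith) hβ.le
      refine ⟨abs_le.1 (by linarith [(abs_le.1 h4).2]), abs_le.1 (abs_le_sqrt (by linarith))⟩
    · rintro ⟨h1, h2⟩
      have h3 := abs_le.2 h1
      have hq := sq_sqrt (show 0 ≤ β ^ 2 - (|x| - α) ^ 2 by nlinarith)
      have key : (|x| - α) ^ 2 + y ^ 2 ≤ β ^ 2 := by nlinarith
      rcases le_total 0 x with h0 | h0
      · rw [abs_of_nonneg h0] at *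
        exact Or.inr (Or.inl ⟨key, hx⟩)
      · rw [abs_of_nonpos h0] at *
        exact Or.inr (Or.inr ⟨by nlinarith, by linarith⟩)

lemma stadium_compact (α β : ℝ) (hα : 0 < α) (hβ : 0 < β) : IsCompact (Stadium α β) := by
  refine IsCompact.of_isClosed_subset
    (isCompact_Icc (a := ((-(α + β), -β) : ℝ × ℝ)) (b := ((α + β, β) : ℝ × ℝ))) ?_ ?_
  · refine (isClosed_Icc.prod isClosed_Icc).union (IsClosed.union ?_ ?_)
    · have i1 : IsClosed {p : ℝ × ℝ | (p.1 - α) ^ 2 + p.2 ^ 2 ≤ β ^ 2} :=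
        isClosed_le (by fun_prop) (by fun_prop)
      have i2 : IsClosed {p : ℝ × ℝ | α ≤ p.1} := isClosed_le (by fun_prop) (by fun_prop)
      exact i1.inter i2
    · have i1 : IsClosed {p : ℝ × ℝ | (p.1 + α) ^ 2 + p.2 ^ 2 ≤ β ^ 2} :=
        isClosed_le (by fun_prop) (by fun_prop)
      have i2 : IsClosed {p : ℝ × ℝ | p.1 ≤ -α} := isClosed_le (by fun_prop) (by fun_prop)
      exact i1.inter i2
  · intro p hp
    have h1 := ((stadium_x α β hα hβ p).1 hp).1
    have h2 := ((stadium_y α β hα hβ p).1 hp).1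
    exact ⟨⟨h2.1, h1.1⟩, ⟨h2.2, h1.2⟩⟩

lemma div_thm (α β : ℝ) (hα : 0 < α) (hβ : 0 < β) (P Q Px Qy : ℝ × ℝ → ℝ)
    (hP : Continuous P) (hQ : Continuous Q) (hPx : Continuous Px) (hQy : Continuous Qy)
    (hPd : ∀ x y, HasDerivAt (fun t => P (t, y)) (Px (x, y)) x)
    (hQd : ∀ x y, HasDerivAt (fun t => Q (x, t)) (Qy (x, y)) y) :
    ∫ p in Stadium α β, (Px p + Qy p) =
      bdryInt α β (fun p n => n.1 * P p + n.2 * Q p) := by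
  have hS := stadium_compact α β hα hβ
  rw [integral_add (hPx.continuousOn.integrableOn_compact hS)
    (hQy.continuousOn.integrableOn_compact hS)]
  rw [fubini_x (-β) β (by linarith) (fun y => α + √(β ^ 2 - y ^ 2)) (fun y => by positivity)
    _ hS (stadium_x α β hα hβ) P Px hPx hPd,
    fubini_y (-(α + β)) (α + β) (by linarith) (fun x => √(β ^ 2 - (max (|x| - α) 0) ^ 2))
    (fun y => by positivity) _ hS (stadium_y α β hα hβ) Q Qy hQy hQd]
  have eP := arc_P β hβ (fun r y => P (α + r, y) - P (-(α + r), y))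
    ((hP.comp (by fun_prop : Continuous fun p : ℝ × ℝ => (α + p.1, p.2))).sub
      (hP.comp (by fun_prop : Continuous fun p : ℝ × ℝ => (-(α + p.1), p.2))))
  have eQ1 := arc_Q α β hβ Q hQ
  have eQ2 := arc_Q α β hβ (fun p => Q (-p.1, p.2)) (hQ.comp (by fun_prop))
  simp only at eP eQ2
  rw [eP]
  set g : ℝ → ℝ := fun x => Q (x, √(β ^ 2 - (max (|x| - α) 0) ^ 2)) -
    Q (x, -√(β ^ 2 - (max (|x| - α) 0) ^ 2)) with hg
  have hgc : Continuous g := (hQ.comp (by fun_prop)).sub (hQ.comp (by fun_prop))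
  have e1 : ∫ x in α..(α + β), g x = β * ∫ θ in (-(π / 2))..(π / 2),
      Q (α + β * cos θ, β * sin θ) * sin θ := by
    rw [← eQ1]
    refine intervalIntegral.integral_congr fun x hx => ?_
    rw [uIcc_of_le (by linarith)] at hx
    simp only [hg]
    rw [abs_of_nonneg (by linarith [hx.1]), max_eq_left (by linarith [hx.1])]
  have e2 : ∫ x in (-(α + β))..(-α), g x = β * ∫ θ in (-(π / 2))..(π / 2),
      Q (-(α + β * cos θ), β * sin θ) * sin θ := by
    rw [← eQ2, ← intervalIntegral.integral_comp_neg]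
    refine intervalIntegral.integral_congr fun x hx => ?_
    rw [uIcc_of_le (by linarith)] at hx
    simp only [hg]
    rw [abs_neg, abs_of_nonneg (by linarith [hx.1]), max_eq_left (by linarith [hx.1])]
  have e3 : ∫ x in (-α)..α, g x = ∫ x in (-α)..α, (Q (x, β) - Q (x, -β)) := by
    refine intervalIntegral.integral_congr fun x hx => ?_
    rw [uIcc_of_le (by linarith)] at hx
    simp only [hg]
    rw [max_eq_right (by linarith [abs_le.2 hx]), show β ^ 2 - 0 ^ 2 = β ^ 2 by ring,
      sqrt_sq hβ.le]
  rw [← intervalIntegral.integral_add_adjacent_intervals (hgc.intervalIntegrable _ (-α))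
    (hgc.intervalIntegrable _ _), ← intervalIntegral.integral_add_adjacent_intervals
    (hgc.intervalIntegrable (-α) α) (hgc.intervalIntegrable _ _), e1, e2, e3]
  have c1 : Continuous fun θ => (P (α + β * cos θ, β * sin θ) -
    P (-(α + β * cos θ), β * sin θ)) * cos θ :=
    ((hP.comp (by fun_prop)).sub (hP.comp (by fun_prop))).mul continuous_cos
  have c2 : Continuous fun θ => Q (α + β * cos θ, β * sin θ) * sin θ :=
    (hQ.comp (by fun_prop)).mul continuous_sin
  have c3 : Continuous fun θ => Q (-(α + β * cos θ), β * sin θ) * sin θ :=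
    (hQ.comp (by fun_prop)).mul continuous_sin
  have e4 : (∫ θ in (-(π / 2))..(π / 2), ((P (α + β * cos θ, β * sin θ) -
    P (-(α + β * cos θ), β * sin θ)) * cos θ + Q (α + β * cos θ, β * sin θ) * sin θ
    + Q (-(α + β * cos θ), β * sin θ) * sin θ)) = _ :=
    (intervalIntegral.integral_add ((c1.add c2).intervalIntegrable _ _)
      (c3.intervalIntegrable _ _)).trans (congrArg (· + _) (intervalIntegral.integral_add
      (c1.intervalIntegrable _ _) (c2.intervalIntegrable _ _)))
  have e5 : bdryInt α β (fun p n => n.1 * P p + n.2 * Q p) =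
    (∫ x in (-α)..α, (Q (x, β) - Q (x, -β))) +
    β * (∫ θ in (-(π / 2))..(π / 2), ((P (α + β * cos θ, β * sin θ) -
    P (-(α + β * cos θ), β * sin θ)) * cos θ + Q (α + β * cos θ, β * sin θ) * sin θ
    + Q (-(α + β * cos θ), β * sin θ) * sin θ)) := by
    unfold bdryInt
    congr 1
    · congr 1; ext x; ring
    · congr 2; ext x; ring
  rw [e5, e4]
  ring

/-- smooth replacement data -/
lemma exists_data (α β : ℝ) (hα : 0 < α) (hβ : 0 < β) (u : ℝ × ℝ → ℝ)
    (h : ∃ V : Set (ℝ × ℝ), IsOpen V ∧ Stadium α β ⊆ V ∧ ContDiffOn ℝ (⊤ : ℕ∞) u V) :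
    ∃ v : ℝ × ℝ → ℝ, ContDiff ℝ (⊤ : ℕ∞) v ∧ ∀ p ∈ Stadium α β, u =ᶠ[nhds p] v := by
  obtain ⟨V, hV, hSV, hu⟩ := h
  have hS := stadium_compact α β hα hβ
  obtain ⟨L, hL, hSL, hLV⟩ := exists_compact_between hS hV hSV
  obtain ⟨χ, h1, h0, -⟩ := exists_contMDiffMap_one_nhds_of_subset_interior (n := (⊤ : ℕ∞))
    (modelWithCornersSelf ℝ (ℝ × ℝ)) hS.isClosed hSL
  refine ⟨fun p => χ p * u p, ?_, ?_⟩
  · rw [contDiff_iff_contDiffAt]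
    intro p
    by_cases hp : p ∈ V
    · exact (χ.contMDiff.contDiff.contDiffAt).mul (hu.contDiffAt (hV.mem_nhds hp))
    · have : (fun p => χ p * u p) =ᶠ[nhds p] fun _ => 0 := by
        filter_upwards [hL.isClosed.isOpen_compl.mem_nhds (fun h => hp (hLV h))] with q hq
        rw [h0 q hq, zero_mul]
      exact contDiffAt_const.congr_of_eventuallyEq this
  · intro p hp
    filter_upwards [(eventually_nhdsSet_iff_forall.1 h1) p hp] with q hq
    rw [hq, one_mul]

lemma pdx_congr {u v : ℝ × ℝ → ℝ} {p : ℝ × ℝ} (h : u =ᶠ[nhds p] v) :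
    pdx u =ᶠ[nhds p] pdx v := by
  filter_upwards [eventually_eventually_nhds.2 h] with q hq
  refine EventuallyEq.deriv_eq ?_
  exact (Continuous.tendsto' (by fun_prop : Continuous fun t : ℝ => (t, q.2)) q.1 q rfl).eventually hq

lemma pdy_congr {u v : ℝ × ℝ → ℝ} {p : ℝ × ℝ} (h : u =ᶠ[nhds p] v) :
    pdy u =ᶠ[nhds p] pdy v := by
  filter_upwards [eventually_eventually_nhds.2 h] with q hq
  refine EventuallyEq.deriv_eq ?_
  exact (Continuous.tendsto' (by fun_prop : Continuous fun t : ℝ => (q.1, t)) q.2 q rfl).eventually hq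

lemma line_x {v : ℝ × ℝ → ℝ} (hv : Differentiable ℝ v) (x y : ℝ) :
    HasDerivAt (fun t => v (t, y)) (fderiv ℝ v (x, y) (1, 0)) x :=
  (hv (x, y)).hasFDerivAt.comp_hasDerivAt (f := fun t : ℝ => (t, y)) x
    ((hasDerivAt_id x).prodMk (hasDerivAt_const x y))

lemma line_y {v : ℝ × ℝ → ℝ} (hv : Differentiable ℝ v) (x y : ℝ) :
    HasDerivAt (fun t => v (x, t)) (fderiv ℝ v (x, y) (0, 1)) y :=
  (hv (x, y)).hasFDerivAt.comp_hasDerivAt (f := fun t : ℝ => (x, t)) y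
    ((hasDerivAt_const y x).prodMk (hasDerivAt_id y))

lemma pdx_eq {v : ℝ × ℝ → ℝ} (hv : Differentiable ℝ v) :
    pdx v = fun p => fderiv ℝ v p (1, 0) := by
  ext ⟨x, y⟩; exact (line_x hv x y).deriv

lemma pdy_eq {v : ℝ × ℝ → ℝ} (hv : Differentiable ℝ v) :
    pdy v = fun p => fderiv ℝ v p (0, 1) := by
  ext ⟨x, y⟩; exact (line_y hv x y).deriv

lemma smooth_pdx {v : ℝ × ℝ → ℝ} (hv : ContDiff ℝ (⊤ : ℕ∞) v) : ContDiff ℝ (⊤ : ℕ∞) (pdx v) := by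
  rw [pdx_eq (hv.differentiable (by simp))]
  exact (hv.fderiv_right (by simp)).clm_apply contDiff_const

lemma smooth_pdy {v : ℝ × ℝ → ℝ} (hv : ContDiff ℝ (⊤ : ℕ∞) v) : ContDiff ℝ (⊤ : ℕ∞) (pdy v) := by
  rw [pdy_eq (hv.differentiable (by simp))]
  exact (hv.fderiv_right (by simp)).clm_apply contDiff_const

lemma hd_x {v : ℝ × ℝ → ℝ} (hv : ContDiff ℝ (⊤ : ℕ∞) v) (x y : ℝ) :
    HasDerivAt (fun t => v (t, y)) (pdx v (x, y)) x := by
  rw [pdx_eq (hv.differentiable (by simp))]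
  exact line_x (hv.differentiable (by simp)) x y

lemma hd_y {v : ℝ × ℝ → ℝ} (hv : ContDiff ℝ (⊤ : ℕ∞) v) (x y : ℝ) :
    HasDerivAt (fun t => v (x, t)) (pdy v (x, y)) y := by
  rw [pdy_eq (hv.differentiable (by simp))]
  exact line_y (hv.differentiable (by simp)) x y

lemma pd_symm {v : ℝ × ℝ → ℝ} (hv : ContDiff ℝ (⊤ : ℕ∞) v) : pdy (pdx v) = pdx (pdy v) := by
  rw [pdy_eq ((smooth_pdx hv).differentiable (by simp)),
    pdx_eq ((smooth_pdy hv).differentiable (by simp)),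
    pdx_eq (hv.differentiable (by simp)), pdy_eq (hv.differentiable (by simp))]
  ext p
  have hd : DifferentiableAt ℝ (fderiv ℝ v) p :=
    (hv.fderiv_right (m := (⊤ : ℕ∞)) (by simp)).differentiable (by simp) p
  have hs : IsSymmSndFDerivAt ℝ v p := hv.contDiffAt.isSymmSndFDerivAt (by
    simp only [minSmoothness_of_isRCLikeNormedField]; exact WithTop.coe_le_coe.2 le_top)
  rw [fderiv_clm_apply hd (by fun_prop), fderiv_clm_apply hd (by fun_prop)]
  simpa using hs (0, 1) (1, 0)

lemma hd_curve {v : ℝ × ℝ → ℝ} (hv : ContDiff ℝ (⊤ : ℕ∞) v) (γ δ : ℝ → ℝ) (γ' δ' θ : ℝ)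
    (h1 : HasDerivAt γ γ' θ) (h2 : HasDerivAt δ δ' θ) :
    HasDerivAt (fun t => v (γ t, δ t)) (γ' * pdx v (γ θ, δ θ) + δ' * pdy v (γ θ, δ θ)) θ := by
  have hvd := hv.differentiable (by simp)
  have h := (hvd (γ θ, δ θ)).hasFDerivAt.comp_hasDerivAt (f := fun t : ℝ => (γ t, δ t)) θ
    (h1.prodMk h2)
  rw [pdx_eq hvd, pdy_eq hvd]
  have : ((γ', δ') : ℝ × ℝ) = γ' • (1, 0) + δ' • (0, 1) := by simp
  rw [this, map_add, map_smul, map_smul] at h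
  exact h


lemma bdryInt_congr (α β : ℝ) (hα : 0 < α) (hβ : 0 < β) (g g' : ℝ × ℝ → ℝ × ℝ → ℝ)
    (h : ∀ p ∈ Stadium α β, ∀ n, g p n = g' p n) : bdryInt α β g = bdryInt α β g' := by
  unfold bdryInt
  congr 1
  · refine intervalIntegral.integral_congr fun x hx => ?_
    rw [uIcc_of_le (by linarith)] at hx
    rw [h _ (Or.inl ⟨hx, by simp only [mem_Icc]; constructor <;> linarith⟩),
      h _ (Or.inl ⟨hx, by simp only [mem_Icc]; constructor <;> linarith⟩)]
  · congr 1
    refine intervalIntegral.integral_congr fun θ hθ => ?_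
    rw [uIcc_of_le (by linarith [pi_pos])] at hθ
    have hc : 0 ≤ cos θ := cos_nonneg_of_mem_Icc hθ
    have hc' := mul_nonneg hβ.le hc
    have := sin_sq_add_cos_sq θ
    have e : (β * cos θ) ^ 2 + (β * sin θ) ^ 2 = β ^ 2 := by linear_combination β ^ 2 * this
    rw [h _ (Or.inr (Or.inl ⟨by simp only; nlinarith, by simp only; linarith⟩)),
      h _ (Or.inr (Or.inr ⟨by simp only; nlinarith, by simp only; linarith⟩))]

lemma bdryInt_mono (α β : ℝ) (hα : 0 < α) (hβ : 0 < β) (g g' : ℝ × ℝ → ℝ × ℝ → ℝ)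
    (hg : Continuous fun q : (ℝ × ℝ) × (ℝ × ℝ) => g q.1 q.2)
    (hg' : Continuous fun q : (ℝ × ℝ) × (ℝ × ℝ) => g' q.1 q.2)
    (h1 : ∀ x ∈ Ioo (-α) α, g (x, β) (0, 1) ≤ g' (x, β) (0, 1))
    (h2 : ∀ x ∈ Ioo (-α) α, g (x, -β) (0, -1) ≤ g' (x, -β) (0, -1))
    (h3 : ∀ θ ∈ Ioo (-(π / 2)) (π / 2), g (α + β * cos θ, β * sin θ) (cos θ, sin θ) ≤
      g' (α + β * cos θ, β * sin θ) (cos θ, sin θ))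
    (h4 : ∀ θ ∈ Ioo (-(π / 2)) (π / 2), g (-(α + β * cos θ), β * sin θ) (-cos θ, sin θ) ≤
      g' (-(α + β * cos θ), β * sin θ) (-cos θ, sin θ)) :
    bdryInt α β g ≤ bdryInt α β g' := by
  have aux : ∀ g : ℝ × ℝ → ℝ × ℝ → ℝ, (Continuous fun q : (ℝ × ℝ) × (ℝ × ℝ) => g q.1 q.2) →
      (Continuous fun x => g (x, β) (0, 1) + g (x, -β) (0, -1)) ∧
      (Continuous fun θ => g (α + β * cos θ, β * sin θ) (cos θ, sin θ) +
        g (-(α + β * cos θ), β * sin θ) (-cos θ, sin θ)) := by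
    intro g hg
    constructor
    · exact (hg.comp (by fun_prop : Continuous fun x : ℝ => (((x, β) : ℝ × ℝ), ((0, 1) : ℝ × ℝ)))).add
        (hg.comp (by fun_prop : Continuous fun x : ℝ => (((x, -β) : ℝ × ℝ), ((0, -1) : ℝ × ℝ))))
    · exact (hg.comp (by fun_prop : Continuous fun θ : ℝ =>
          (((α + β * cos θ, β * sin θ) : ℝ × ℝ), ((cos θ, sin θ) : ℝ × ℝ)))).add
        (hg.comp (by fun_prop : Continuous fun θ : ℝ =>
          (((-(α + β * cos θ), β * sin θ) : ℝ × ℝ), ((-cos θ, sin θ) : ℝ × ℝ))))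
  obtain ⟨a1, a2⟩ := aux g hg
  obtain ⟨b1, b2⟩ := aux g' hg'
  unfold bdryInt
  refine add_le_add ?_ (mul_le_mul_of_nonneg_left ?_ hβ.le)
  · exact intervalIntegral.integral_mono_on_of_le_Ioo (by linarith) (a1.intervalIntegrable _ _)
      (b1.intervalIntegrable _ _) fun x hx => add_le_add (h1 x hx) (h2 x hx)
  · exact intervalIntegral.integral_mono_on_of_le_Ioo (by linarith [pi_pos])
      (a2.intervalIntegrable _ _)
      (b2.intervalIntegrable _ _) fun x hx => add_le_add (h3 x hx) (h4 x hx)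

lemma bdryInt_mul (α β k : ℝ) (g : ℝ × ℝ → ℝ × ℝ → ℝ) :
    bdryInt α β (fun p n => k * g p n) = k * bdryInt α β g := by
  unfold bdryInt
  simp only [← mul_add, intervalIntegral.integral_const_mul]
  ring

/-- flux comparison at a boundary point where `u = 0` and the tangential derivative vanishes -/
lemma flux_alg (β x y n1 n2 a b v l M : ℝ) (hn : n1 ^ 2 + n2 ^ 2 = 1) (hv : v = 0)
    (ht : -n2 * a + n1 * b = 0) (hx : β ≤ x * n1 + y * n2) :
    β / 2 * (n1 * a + n2 * b) ^ 2 ≤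
      n1 * ((x * a + y * b) * a - (a ^ 2 + b ^ 2) / 2 * x + l ^ 2 / 2 * v ^ 2 * x - M * (v * a)) +
      n2 * ((x * a + y * b) * b - (a ^ 2 + b ^ 2) / 2 * y + l ^ 2 / 2 * v ^ 2 * y
        - M * (v * b)) := by
  subst hv
  obtain ⟨N, hN⟩ : ∃ N, N = n1 * a + n2 * b := ⟨_, rfl⟩
  have ha : a = N * n1 := by rw [hN]; linear_combination (-a) * hn - n2 * ht
  have hb : b = N * n2 := by rw [hN]; linear_combination (-b) * hn + n1 * ht
  rw [← hN]
  have : n1 * ((x * a + y * b) * a - (a ^ 2 + b ^ 2) / 2 * x + l ^ 2 / 2 * 0 ^ 2 * x - M * (0 * a)) +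
      n2 * ((x * a + y * b) * b - (a ^ 2 + b ^ 2) / 2 * y + l ^ 2 / 2 * 0 ^ 2 * y
        - M * (0 * b)) = 1 / 2 * N ^ 2 * (x * n1 + y * n2) := by
    rw [ha, hb]
    linear_combination (1 / 2 * N ^ 2 * (x * n1 + y * n2)) * hn
  rw [this]
  nlinarith [mul_le_mul_of_nonneg_left hx (sq_nonneg N)]

lemma div_alg (x y a b A B D v l M f : ℝ) (hM : 0 ≤ M) (hxy : x ^ 2 + y ^ 2 ≤ M) (hl : 1 ≤ l)
    (hf : -A - D - l ^ 2 * v = f) :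
    ((a + x * A + y * B) * a + (x * a + y * b) * A - (a * A + b * B) * x - (a ^ 2 + b ^ 2) / 2
      + l ^ 2 * (v * a) * x + l ^ 2 / 2 * v ^ 2 - M * (a * a + v * A)) +
    ((b + x * B + y * D) * b + (x * a + y * b) * D - (a * B + b * D) * y - (a ^ 2 + b ^ 2) / 2
      + l ^ 2 * (v * b) * y + l ^ 2 / 2 * v ^ 2 - M * (b * b + v * D)) ≤
    (1 + 2 * M) * (l ^ 2 * v ^ 2 + f ^ 2) := by
  have e : ((a + x * A + y * B) * a + (x * a + y * b) * A - (a * A + b * B) * x - (a ^ 2 + b ^ 2) / 2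
      + l ^ 2 * (v * a) * x + l ^ 2 / 2 * v ^ 2 - M * (a * a + v * A)) +
    ((b + x * B + y * D) * b + (x * a + y * b) * D - (a * B + b * D) * y - (a ^ 2 + b ^ 2) / 2
      + l ^ 2 * (v * b) * y + l ^ 2 / 2 * v ^ 2 - M * (b * b + v * D)) =
    -f * (x * a + y * b) + (1 + M) * (l ^ 2 * v ^ 2) - M * (a ^ 2 + b ^ 2) + M * (f * v) := by
    rw [← hf]; ring
  rw [e]
  have h1 : -f * (x * a + y * b) ≤ f ^ 2 + M * (a ^ 2 + b ^ 2) := by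
    have c1 : (x * a + y * b) ^ 2 ≤ (x ^ 2 + y ^ 2) * (a ^ 2 + b ^ 2) := by
      nlinarith [sq_nonneg (x * b - y * a)]
    have c2 : (x ^ 2 + y ^ 2) * (a ^ 2 + b ^ 2) ≤ M * (a ^ 2 + b ^ 2) :=
      mul_le_mul_of_nonneg_right hxy (by positivity)
    nlinarith [sq_nonneg (f + (x * a + y * b)), sq_nonneg f, sq_nonneg (x * a + y * b)]
  have h2 : f * v ≤ f ^ 2 + l ^ 2 * v ^ 2 := by
    have : v ^ 2 ≤ l ^ 2 * v ^ 2 := le_mul_of_one_le_left (sq_nonneg v) (by nlinarith)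
    nlinarith [sq_nonneg (f - v), sq_nonneg f, sq_nonneg v]
  have h3 := mul_le_mul_of_nonneg_left h2 hM
  have h4 : 0 ≤ M * f ^ 2 := by positivity
  nlinarith [sq_nonneg (l * v)]

/-- there are `C > 0` and `λ₀ > 0` depending only on `α, β` such that every
real Dirichlet quasimode datum with `λ ≥ λ₀` satisfies
`∫_{∂S} |∂_N u|² dl ≤ C (λ² ‖u‖²_{L²(S)} + ‖f‖²_{L²(S)})`. -/
theorem stmt13 (α β : ℝ) (hα : 0 < α) (hβ : 0 < β) :
    ∃ C > 0, ∃ lam₀ > 0, ∀ d : QMDatum α β, d.lam ≥ lam₀ →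
      bdryInt α β (fun p n => (nderiv d.u p n) ^ 2) ≤
        C * (d.lam ^ 2 * (∫ p in Stadium α β, (d.u p) ^ 2) +
             (∫ p in Stadium α β, (d.f p) ^ 2)) := by
  obtain ⟨M, hMdef⟩ : ∃ M, M = (α + β) ^ 2 + β ^ 2 := ⟨_, rfl⟩
  have hM : 0 ≤ M := by rw [hMdef]; positivity
  refine ⟨2 / β * (1 + 2 * M), by positivity, 1, one_pos, fun d hl => ?_⟩
  obtain ⟨v, hv, huv⟩ := exists_data α β hα hβ d.u d.smooth
  have hS := stadium_compact α β hα hβ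
  have hSm : MeasurableSet (Stadium α β) := hS.isClosed.measurableSet
  set l := d.lam with hldef
  have sa := smooth_pdx hv
  have sb := smooth_pdy hv
  have cv := hv.continuous
  have ca := sa.continuous
  have cb := sb.continuous
  have cA := (smooth_pdx sa).continuous
  have cB := (smooth_pdx sb).continuous
  have cD := (smooth_pdy sb).continuous
  obtain ⟨P, hP⟩ : ∃ P : ℝ × ℝ → ℝ, P = fun p =>
      (p.1 * pdx v p + p.2 * pdy v p) * pdx v p - (pdx v p ^ 2 + pdy v p ^ 2) / 2 * p.1
      + l ^ 2 / 2 * v p ^ 2 * p.1 - M * (v p * pdx v p) := ⟨_, rfl⟩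
  obtain ⟨Q, hQ⟩ : ∃ Q : ℝ × ℝ → ℝ, Q = fun p =>
      (p.1 * pdx v p + p.2 * pdy v p) * pdy v p - (pdx v p ^ 2 + pdy v p ^ 2) / 2 * p.2
      + l ^ 2 / 2 * v p ^ 2 * p.2 - M * (v p * pdy v p) := ⟨_, rfl⟩
  obtain ⟨Px, hPx⟩ : ∃ Px : ℝ × ℝ → ℝ, Px = fun p =>
      (pdx v p + p.1 * pdx (pdx v) p + p.2 * pdx (pdy v) p) * pdx v p
      + (p.1 * pdx v p + p.2 * pdy v p) * pdx (pdx v) p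
      - (pdx v p * pdx (pdx v) p + pdy v p * pdx (pdy v) p) * p.1
      - (pdx v p ^ 2 + pdy v p ^ 2) / 2 + l ^ 2 * (v p * pdx v p) * p.1 + l ^ 2 / 2 * v p ^ 2
      - M * (pdx v p * pdx v p + v p * pdx (pdx v) p) := ⟨_, rfl⟩
  obtain ⟨Qy, hQy⟩ : ∃ Qy : ℝ × ℝ → ℝ, Qy = fun p =>
      (pdy v p + p.1 * pdx (pdy v) p + p.2 * pdy (pdy v) p) * pdy v p
      + (p.1 * pdx v p + p.2 * pdy v p) * pdy (pdy v) p
      - (pdx v p * pdx (pdy v) p + pdy v p * pdy (pdy v) p) * p.2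
      - (pdx v p ^ 2 + pdy v p ^ 2) / 2 + l ^ 2 * (v p * pdy v p) * p.2 + l ^ 2 / 2 * v p ^ 2
      - M * (pdy v p * pdy v p + v p * pdy (pdy v) p) := ⟨_, rfl⟩
  have cP : Continuous P := by rw [hP]; fun_prop
  have cQ : Continuous Q := by rw [hQ]; fun_prop
  have cPx : Continuous Px := by rw [hPx]; fun_prop
  have cQy : Continuous Qy := by rw [hQy]; fun_prop
  have hPd : ∀ x y, HasDerivAt (fun t => P (t, y)) (Px (x, y)) x := by
    intro x y
    have d0 := hd_x hv x y
    have d1 := hd_x sa x y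
    have d2 := hd_x sb x y
    have di := hasDerivAt_id' x
    rw [hP, hPx]
    have := (((((di.mul d1).add (d2.const_mul y)).mul d1).sub
      ((((d1.pow 2).add (d2.pow 2)).div_const 2).mul di)).add
      (((d0.pow 2).const_mul (l ^ 2 / 2)).mul di)).sub ((d0.mul d1).const_mul M)
    refine (this.congr_deriv ?_)
    simp
    ring
  have hQd : ∀ x y, HasDerivAt (fun t => Q (x, t)) (Qy (x, y)) y := by
    intro x y
    have d0 := hd_y hv x y
    have d1 := hd_y sa x y
    have d2 := hd_y sb x y
    rw [pd_symm hv] at d1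
    have di := hasDerivAt_id' y
    rw [hQ, hQy]
    have := ((((((d1.const_mul x)).add (di.mul d2)).mul d2).sub
      ((((d1.pow 2).add (d2.pow 2)).div_const 2).mul di)).add
      (((d0.pow 2).const_mul (l ^ 2 / 2)).mul di)).sub ((d0.mul d2).const_mul M)
    refine (this.congr_deriv ?_)
    simp
    ring
  have hdiv := div_thm α β hα hβ P Q Px Qy cP cQ cPx cQy hPd hQd
  -- boundary vanishing
  have hv0 : ∀ p ∈ StadiumBoundary α β, p ∈ Stadium α β → v p = 0 := fun p hp hp' => by
    rw [← (huv p hp').self_of_nhds]; exact d.dirichlet p hp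
  have seg : ∀ s, (s = β ∨ s = -β) → ∀ x ∈ Ioo (-α) α, v (x, s) = 0 ∧ pdx v (x, s) = 0 := by
    intro s hs
    have h0 : ∀ x ∈ Ioo (-α) α, v (x, s) = 0 := by
      intro x hx
      refine hv0 _ (Or.inl ⟨abs_le.2 ⟨hx.1.le, hx.2.le⟩, hs⟩) (Or.inl ⟨⟨hx.1.le, hx.2.le⟩, ?_⟩)
      rcases hs with rfl | rfl <;> simp only [mem_Icc] <;> constructor <;> linarith
    intro x hx
    refine ⟨h0 x hx, (hd_x hv x s).unique ((hasDerivAt_const x (0 : ℝ)).congr_of_eventuallyEq ?_)⟩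
    filter_upwards [isOpen_Ioo.mem_nhds hx] with t ht using h0 t ht
  have arc : ∀ s : ℝ, (s = 1 ∨ s = -1) → ∀ θ ∈ Ioo (-(π / 2)) (π / 2),
      v (s * (α + β * cos θ), β * sin θ) = 0 ∧
      -sin θ * pdx v (s * (α + β * cos θ), β * sin θ) +
        (s * cos θ) * pdy v (s * (α + β * cos θ), β * sin θ) = 0 := by
    intro s hs
    have h0 : ∀ θ ∈ Ioo (-(π / 2)) (π / 2), v (s * (α + β * cos θ), β * sin θ) = 0 := by
      intro θ hθ
      have hc : 0 < cos θ := cos_pos_of_mem_Ioo hθ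
      have hc' := mul_pos hβ hc
      have := sin_sq_add_cos_sq θ
      have e : (β * cos θ) ^ 2 + (β * sin θ) ^ 2 = β ^ 2 := by linear_combination β ^ 2 * this
      have habs : |s * (α + β * cos θ)| = α + β * cos θ := by
        rw [abs_mul, abs_of_pos (by linarith : 0 < α + β * cos θ)]
        rcases hs with rfl | rfl <;> simp
      refine hv0 _ (Or.inr ⟨?_, ?_⟩) ?_
      · simp only [habs]; nlinarith
      · simp only [habs]; linarith
      · rcases hs with rfl | rfl
        · exact Or.inr (Or.inl ⟨by simp only; nlinarith, by simp only; linarith⟩)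
        · exact Or.inr (Or.inr ⟨by simp only; nlinarith, by simp only; linarith⟩)
    intro θ hθ
    refine ⟨h0 θ hθ, ?_⟩
    have hc := hd_curve hv (fun θ => s * (α + β * cos θ)) (fun θ => β * sin θ) _ _ θ
      ((((hasDerivAt_cos θ).const_mul β).const_add α).const_mul s)
      ((hasDerivAt_sin θ).const_mul β)
    have hz := hc.unique ((hasDerivAt_const θ (0 : ℝ)).congr_of_eventuallyEq (by
      filter_upwards [isOpen_Ioo.mem_nhds hθ] with t ht using h0 t ht))
    have hs2 : s * s = 1 := by rcases hs with rfl | rfl <;> norm_num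
    have : β * (-sin θ * pdx v (s * (α + β * cos θ), β * sin θ) +
        (s * cos θ) * pdy v (s * (α + β * cos θ), β * sin θ)) = 0 := by
      linear_combination s * hz +
        (β * sin θ * pdx v (s * (α + β * cos θ), β * sin θ)) * hs2
    rcases mul_eq_zero.1 this with h | h
    · exact absurd h hβ.ne'
    · exact h
  have hb : bdryInt α β (fun p n => β / 2 * (nderiv v p n) ^ 2) ≤
      bdryInt α β (fun p n => n.1 * P p + n.2 * Q p) := by
    refine bdryInt_mono α β hα hβ _ _ ?_ ?_ ?_ ?_ ?_ ?_
    · unfold nderiv; fun_prop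
    · fun_prop
    · intro x hx
      obtain ⟨z1, z2⟩ := seg β (Or.inl rfl) x hx
      simp only [hP, hQ, nderiv]
      exact flux_alg _ _ _ _ _ _ _ _ _ _ (by norm_num) z1 (by rw [z2]; ring) (by linarith)
    · intro x hx
      obtain ⟨z1, z2⟩ := seg (-β) (Or.inr rfl) x hx
      simp only [hP, hQ, nderiv]
      exact flux_alg _ _ _ _ _ _ _ _ _ _ (by norm_num) z1 (by rw [z2]; ring) (by linarith)
    · intro θ hθ
      obtain ⟨z1, z2⟩ := arc 1 (Or.inl rfl) θ hθ
      rw [one_mul] at z1 z2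
      rw [one_mul] at z2
      have hc : 0 < cos θ := cos_pos_of_mem_Ioo hθ
      have := sin_sq_add_cos_sq θ
      simp only [hP, hQ, nderiv]
      exact flux_alg _ _ _ _ _ _ _ _ _ _ (by linarith) z1 z2
        (by nlinarith [mul_pos hα hc])
    · intro θ hθ
      obtain ⟨z1, z2⟩ := arc (-1) (Or.inr rfl) θ hθ
      rw [neg_one_mul] at z1 z2
      rw [neg_one_mul] at z2
      have hc : 0 < cos θ := cos_pos_of_mem_Ioo hθ
      have := sin_sq_add_cos_sq θ
      simp only [hP, hQ, nderiv]
      exact flux_alg _ _ _ _ _ _ _ _ _ _ (by nlinarith) z1 z2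
        (by nlinarith [mul_pos hα hc])
  rw [bdryInt_mul α β (β / 2) (fun p n => (nderiv v p n) ^ 2), ← hdiv] at hb
  have hcongr : bdryInt α β (fun p n => (nderiv d.u p n) ^ 2) =
      bdryInt α β (fun p n => (nderiv v p n) ^ 2) := by
    refine bdryInt_congr α β hα hβ _ _ fun p hp n => ?_
    simp only [nderiv, (pdx_congr (huv p hp)).self_of_nhds, (pdy_congr (huv p hp)).self_of_nhds]
  obtain ⟨F, hF⟩ : ∃ F : ℝ × ℝ → ℝ, F = fun p => -(pdx (pdx v) p) - pdy (pdy v) p - l ^ 2 * v p :=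
    ⟨_, rfl⟩
  have cF : Continuous F := by rw [hF]; fun_prop
  have hfF : ∀ p ∈ Stadium α β, d.f p = F p := by
    intro p hp
    rw [← d.eqn p hp, hF]
    simp only [lap, (pdx_congr (pdx_congr (huv p hp))).self_of_nhds,
      (pdy_congr (pdy_congr (huv p hp))).self_of_nhds, (huv p hp).self_of_nhds, ← hldef]
  have i1 : ∫ p in Stadium α β, (d.u p) ^ 2 = ∫ p in Stadium α β, (v p) ^ 2 :=
    setIntegral_congr_fun hSm fun p hp => by simp only [(huv p hp).self_of_nhds]
  have i2 : ∫ p in Stadium α β, (d.f p) ^ 2 = ∫ p in Stadium α β, (F p) ^ 2 :=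
    setIntegral_congr_fun hSm fun p hp => by simp only [hfF p hp]
  have cr : Continuous fun p => (1 + 2 * M) * (l ^ 2 * v p ^ 2 + F p ^ 2) := by fun_prop
  have hmono : ∫ p in Stadium α β, (Px p + Qy p) ≤
      ∫ p in Stadium α β, (1 + 2 * M) * (l ^ 2 * v p ^ 2 + F p ^ 2) := by
    refine setIntegral_mono_on ((cPx.add cQy).continuousOn.integrableOn_compact hS)
      (cr.continuousOn.integrableOn_compact hS) hSm fun p hp => ?_
    simp only [hPx, hQy]
    refine div_alg _ _ _ _ _ _ _ _ _ _ _ hM ?_ hl (by rw [hF])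
    have q1 := ((stadium_x α β hα hβ p).1 hp).1
    have q2 := ((stadium_y α β hα hβ p).1 hp).1
    rw [hMdef]
    nlinarith [q1.1, q1.2, q2.1, q2.2]
  have c1 : Continuous fun p => l ^ 2 * v p ^ 2 := by fun_prop
  have c2 : Continuous fun p => F p ^ 2 := by fun_prop
  rw [integral_const_mul, integral_add (c1.continuousOn.integrableOn_compact hS)
    (c2.continuousOn.integrableOn_compact hS), integral_const_mul] at hmono
  rw [hcongr, i1, i2]
  have hfin := mul_le_mul_of_nonneg_left (hb.trans hmono) (by positivity : 0 ≤ 2 / β)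
  rw [← mul_assoc, show 2 / β * (β / 2) = 1 by field_simp, one_mul] at hfin
  rw [mul_assoc]
  exact hfin
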